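/- In the nonlinear setting with standing conditions (N1)–(N5): limsup_{n→∞} sup{ m_n([b_{l+q}, b_l])/(b_l − b_{l+q})^{h_n} : l ≥ 0, q ≥ 1 } ≤ 1. -/

import Mathlib

open Set Filter MeasureTheory Topology

noncomputable section

/-- Composition `g_{i₁} ∘ g_{i₂} ∘ ⋯ ∘ g_{i_l}` along a finite word. -/
def wordComp (g : ℕ → ℝ → ℝ) : List ℕ → ℝ → ℝ
  | [] => id
  | k :: w => g k ∘ wordComp g w

/-- The limit set `J_n` of the IFS `S_n = {g_1, …, g_n}`. -/
def limitSet (g : ℕ → ℝ → ℝ) (n : ℕ) : Set ℝ :=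
  ⋂ l : ℕ, ⋃ w ∈ {w : List ℕ | w.length = l + 1 ∧ ∀ i ∈ w, 1 ≤ i ∧ i ≤ n},
    wordComp g w '' Set.Icc (0 : ℝ) 1

/-- The distortion `κ(g) = sup_{x,y ∈ [0,1]} |g′(y)|/|g′(x)|` of a map with derivative `f'`. -/
def distortion (f' : ℝ → ℝ) : ℝ :=
  ⨆ x ∈ Set.Icc (0 : ℝ) 1, ⨆ y ∈ Set.Icc (0 : ℝ) 1, |f' y| / |f' x|

/-- The nonlinear setting of the paper: a strictly decreasing sequence `b_k → 0` with `b_0 = 1`,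
    decreasing `C²` diffeomorphisms `g_k : [0,1] → [b_k, b_{k-1}]` (with first and second
    derivatives `g'` and `g''`), the Hausdorff dimensions `h_n` of the limit sets `J_n`, and
    the standing conditions (N1)–(N5). -/
structure NonlinearIFS where
  b : ℕ → ℝ
  g : ℕ → ℝ → ℝ
  g' : ℕ → ℝ → ℝ
  g'' : ℕ → ℝ → ℝ
  h : ℕ → ℝ
  b_zero : b 0 = 1
  b_anti : StrictAnti b
  b_lim : Filter.Tendsto b Filter.atTop (nhds 0)
  g_image : ∀ k, 1 ≤ k → g k '' Set.Icc (0 : ℝ) 1 = Set.Icc (b k) (b (k - 1))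
  g_anti : ∀ k, 1 ≤ k → StrictAntiOn (g k) (Set.Icc (0 : ℝ) 1)
  g_zero : ∀ k, 1 ≤ k → g k 0 = b (k - 1)
  g_one : ∀ k, 1 ≤ k → g k 1 = b k
  deriv1 : ∀ k, 1 ≤ k → ∀ x ∈ Set.Icc (0 : ℝ) 1, HasDerivAt (g k) (g' k x) x
  deriv2 : ∀ k, 1 ≤ k → ∀ x ∈ Set.Icc (0 : ℝ) 1, HasDerivAt (g' k) (g'' k x) x
  deriv_ne : ∀ k, 1 ≤ k → ∀ x ∈ Set.Icc (0 : ℝ) 1, g' k x ≠ 0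
  h_dim : ∀ n, 1 ≤ n → dimH (limitSet g n) = ENNReal.ofReal (h n)
  N1 : Filter.Tendsto (fun n : ℕ => (1 - h n) * Real.log n) Filter.atTop (nhds 0)
  N2 : Filter.Tendsto (fun n : ℕ => ⨆ k ∈ Set.Ici n, b k / b (k + 1)) Filter.atTop (nhds 1)
  N3 : ∃ c : ℝ, 0 < c ∧ ∀ n, 1 ≤ n → ∀ x ∈ Set.Icc (0 : ℝ) 1, |g'' n x / g' n x| < c
  N4 : Filter.Tendsto (fun n : ℕ => distortion (g' n)) Filter.atTop (nhds 1)
  N5 : ∃ α : ℝ, α < 1 ∧ ∀ n, 1 ≤ n → ∀ x ∈ Set.Icc (0 : ℝ) 1, |g' n x| < α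

/-- The normalized Hausdorff measure `m_n(A) = H_{h_n}(A ∩ J_n)/H_{h_n}(J_n)`. -/
def normMeas (S : NonlinearIFS) (n : ℕ) (A : Set ℝ) : ENNReal :=
  μH[S.h n] (A ∩ limitSet S.g n) / μH[S.h n] (limitSet S.g n)


/-! helper material -/

def clmp (x : ℝ) : ℝ := max 0 (min 1 x)

lemma clmp_mem (x : ℝ) : clmp x ∈ Icc (0:ℝ) 1 := by
  unfold clmp; exact ⟨le_max_left _ _, max_le zero_le_one (min_le_left _ _)⟩

lemma clmp_of_mem {x : ℝ} (hx : x ∈ Icc (0:ℝ) 1) : clmp x = x := by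
  unfold clmp; rw [min_eq_right hx.2, max_eq_right hx.1]

lemma clmp_cont : Continuous clmp := by unfold clmp; fun_prop

def Cone (C : ℝ) (f : ℝ → ℝ) : Prop :=
  Continuous f ∧ (∀ x ∈ Icc (0:ℝ) 1, 0 ≤ f x) ∧
    ∀ x ∈ Icc (0:ℝ) 1, ∀ y ∈ Icc (0:ℝ) 1, f x ≤ f y * Real.exp (C * |x - y|)

def II (f : ℝ → ℝ) : ℝ := ∫ x in Icc (0:ℝ) 1, f x

lemma cont_int {f : ℝ → ℝ} (hf : Continuous f) : IntegrableOn f (Icc (0:ℝ) 1) :=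
  hf.continuousOn.integrableOn_Icc

lemma II_const (a : ℝ) : II (fun _ => a) = a := by
  simp [II]

lemma II_mono {f g : ℝ → ℝ} (hf : Continuous f) (hg : Continuous g)
    (h : ∀ x ∈ Icc (0:ℝ) 1, f x ≤ g x) : II f ≤ II g :=
  setIntegral_mono_on (cont_int hf) (cont_int hg) measurableSet_Icc h

lemma abs_sub_le_one' {x y : ℝ} (hx : x ∈ Icc (0:ℝ) 1) (hy : y ∈ Icc (0:ℝ) 1) : |x - y| ≤ 1 := by
  rw [abs_le]; constructor <;> linarith [hx.1, hx.2, hy.1, hy.2]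

lemma Cone.le1 {C : ℝ} (hC : 0 ≤ C) {f : ℝ → ℝ} (hf : Cone C f) {x y : ℝ}
    (hx : x ∈ Icc (0:ℝ) 1) (hy : y ∈ Icc (0:ℝ) 1) : f x ≤ f y * Real.exp C := by
  refine (hf.2.2 x hx y hy).trans ?_
  have := hf.2.1 y hy
  gcongr
  nlinarith [abs_sub_le_one' hx hy]

lemma Cone.le_II {C : ℝ} (hC : 0 ≤ C) {f : ℝ → ℝ} (hf : Cone C f) {x : ℝ}
    (hx : x ∈ Icc (0:ℝ) 1) : f x ≤ Real.exp C * II f := by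
  have h := II_mono (g := fun y => f y * Real.exp C) (continuous_const (y := f x)) (hf.1.mul_const _)
    (fun y hy => hf.le1 hC hx hy)
  rw [II_const] at h
  have : II (fun y => f y * Real.exp C) = II f * Real.exp C := by
    unfold II; exact integral_mul_const _ _
  linarith

lemma Cone.II_le {C : ℝ} (hC : 0 ≤ C) {f : ℝ → ℝ} (hf : Cone C f) {x : ℝ}
    (hx : x ∈ Icc (0:ℝ) 1) : Real.exp (-C) * II f ≤ f x := by
  have h := II_mono hf.1 (continuous_const (y := f x * Real.exp C))
    (fun y hy => hf.le1 hC hy hx)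
  rw [II_const] at h
  rw [Real.exp_neg, inv_mul_le_iff₀ (Real.exp_pos _)]; linarith

lemma Cone.II_nonneg {C : ℝ} {f : ℝ → ℝ} (hf : Cone C f) : 0 ≤ II f :=
  setIntegral_nonneg measurableSet_Icc hf.2.1

lemma Cone.mono {C D : ℝ} (h : C ≤ D) {f : ℝ → ℝ} (hf : Cone C f) : Cone D f := by
  refine ⟨hf.1, hf.2.1, fun x hx y hy => (hf.2.2 x hx y hy).trans ?_⟩
  have := hf.2.1 y hy
  gcongr

/-- subtracting a constant -/
lemma Cone.sub {C1 s t : ℝ} {f : ℝ → ℝ} (hs0 : 0 ≤ s) (hs1 : s ≤ 1)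
    (hf : Cone ((1 - s) * C1) f) (hC : 0 ≤ C1)
    (ht : ∀ x ∈ Icc (0:ℝ) 1, t ≤ s * f x) : Cone C1 (fun x => f x - t) := by
  refine ⟨hf.1.sub continuous_const, fun x hx => ?_, fun x hx y hy => ?_⟩
  · have := ht x hx; have := hf.2.1 x hx; nlinarith
  · have h1 := hf.2.2 x hx y hy
    have h0 := hf.2.1 y hy
    have hty := ht y hy
    set d := |x - y|
    have hd : 0 ≤ d := abs_nonneg _
    have hconv := convexOn_exp.2 (mem_univ (C1 * d)) (mem_univ (0:ℝ)) (by linarith : 0 ≤ 1 - s) hs0 (by ring)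
    simp only [smul_eq_mul, mul_zero, add_zero, Real.exp_zero, mul_one] at hconv
    have e : (1 - s) * C1 * d = (1 - s) * (C1 * d) := by ring
    rw [e] at h1
    have hE : 1 ≤ Real.exp (C1 * d) := Real.one_le_exp (by positivity)
    have h2 : f y * Real.exp ((1 - s) * (C1 * d)) ≤ f y * ((1 - s) * Real.exp (C1 * d) + s) :=
      mul_le_mul_of_nonneg_left hconv h0
    have h3 : t * (Real.exp (C1 * d) - 1) ≤ s * f y * (Real.exp (C1 * d) - 1) :=
      mul_le_mul_of_nonneg_right hty (by linarith)
    show f x - t ≤ (f y - t) * Real.exp (C1 * d)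
    nlinarith

lemma tangent {t a h : ℝ} (ht : 0 ≤ t) (ha : 0 < a) (h0 : 0 ≤ h) (h1 : h ≤ 1) :
    t ^ h ≤ a ^ h * (h * (t / a) + (1 - h)) := by
  have := rpow_one_add_le_one_add_mul_self (s := t / a - 1) (p := h)
    (by have : 0 ≤ t / a := by positivity
        linarith) h0 h1
  have e : t ^ h = a ^ h * (t / a) ^ h := by
    rw [← Real.mul_rpow ha.le (by positivity)]; congr 1; field_simp
  rw [e]
  refine mul_le_mul_of_nonneg_left ?_ (by positivity)
  rw [show 1 + (t / a - 1) = t / a by ring] at this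
  linarith

lemma sum_rpow_le' (s : Finset ℕ) (a : ℕ → ℝ) (ha : ∀ k ∈ s, 0 ≤ a k) {A h : ℝ} (hA : 0 < A)
    (hs : ∑ k ∈ s, a k ≤ A) (n : ℕ) (hn : 1 ≤ n) (hc : s.card ≤ n) (h0 : 0 ≤ h) (h1 : h ≤ 1) :
    ∑ k ∈ s, a k ^ h ≤ (n:ℝ) ^ (1 - h) * A ^ h := by
  have hn' : (0:ℝ) < n := by exact_mod_cast hn
  have hAn : 0 < A / n := by positivity
  have hc' : (s.card : ℝ) ≤ n := by exact_mod_cast hc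
  calc ∑ k ∈ s, a k ^ h ≤ ∑ k ∈ s, (A / n) ^ h * (h * (a k / (A / n)) + (1 - h)) :=
        Finset.sum_le_sum fun k hk => tangent (ha k hk) hAn h0 h1
    _ = (A / n) ^ h * (h * ((∑ k ∈ s, a k) / (A / n)) + s.card * (1 - h)) := by
        rw [← Finset.mul_sum, Finset.sum_add_distrib, ← Finset.mul_sum, Finset.sum_div, Finset.sum_const, nsmul_eq_mul]
    _ ≤ (A / n) ^ h * (h * (A / (A / n)) + n * (1 - h)) := by
        gcongr
    _ = (n:ℝ) ^ (1 - h) * A ^ h := by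
        rw [Real.div_rpow hA.le hn'.le, Real.rpow_sub hn', Real.rpow_one]
        field_simp
        ring

section
variable (S : NonlinearIFS)

def GG (k : ℕ) (x : ℝ) : ℝ := |S.g' k (clmp x)|

lemma g_maps {k : ℕ} (hk : 1 ≤ k) {x : ℝ} (hx : x ∈ Icc (0:ℝ) 1) :
    S.g k x ∈ Icc (S.b k) (S.b (k-1)) := by
  rw [← S.g_image k hk]; exact mem_image_of_mem _ hx

lemma b_pos (k : ℕ) : 0 < S.b k := by
  have h1 : S.b (k+1) < S.b k := S.b_anti (Nat.lt_succ_self k)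
  have h2 : 0 ≤ S.b (k+1) := S.b_anti.antitone.le_of_tendsto S.b_lim (k+1)
  linarith

lemma b_le (k : ℕ) : S.b k ≤ 1 := by
  rw [← S.b_zero]; exact S.b_anti.antitone (Nat.zero_le k)

lemma g_maps' {k : ℕ} (hk : 1 ≤ k) {x : ℝ} (hx : x ∈ Icc (0:ℝ) 1) :
    S.g k x ∈ Icc (0:ℝ) 1 := by
  have := g_maps S hk hx
  exact ⟨(b_pos S k).le.trans this.1, this.2.trans (b_le S _)⟩

lemma g_contOn {k : ℕ} (hk : 1 ≤ k) : ContinuousOn (S.g k) (Icc (0:ℝ) 1) :=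
  fun x hx => (S.deriv1 k hk x hx).continuousAt.continuousWithinAt

lemma g'_contOn {k : ℕ} (hk : 1 ≤ k) : ContinuousOn (S.g' k) (Icc (0:ℝ) 1) :=
  fun x hx => (S.deriv2 k hk x hx).continuousAt.continuousWithinAt

lemma GG_cont {k : ℕ} (hk : 1 ≤ k) : Continuous (GG S k) := by
  unfold GG
  exact ((g'_contOn S hk).comp_continuous clmp_cont clmp_mem).abs

lemma gc_cont {k : ℕ} (hk : 1 ≤ k) : Continuous (fun x => S.g k (clmp x)) :=
  (g_contOn S hk).comp_continuous clmp_cont clmp_mem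

lemma GG_pos {k : ℕ} (hk : 1 ≤ k) (x : ℝ) : 0 < GG S k x :=
  abs_pos.2 (S.deriv_ne k hk _ (clmp_mem x))

lemma GG_of_mem {k : ℕ} {x : ℝ} (hx : x ∈ Icc (0:ℝ) 1) : GG S k x = |S.g' k x| := by
  rw [GG, clmp_of_mem hx]

lemma GG_cone {c : ℝ} (hc : ∀ n, 1 ≤ n → ∀ x ∈ Set.Icc (0 : ℝ) 1, |S.g'' n x / S.g' n x| < c)
    {k : ℕ} (hk : 1 ≤ k) : Cone c (GG S k) := by
  refine ⟨GG_cont S hk, fun x _ => (GG_pos S hk x).le, fun x hx y hy => ?_⟩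
  rw [GG_of_mem S hx, GG_of_mem S hy]
  have h := (convex_Icc (0:ℝ) 1).norm_image_sub_le_of_norm_hasDerivWithin_le
    (f := fun x => Real.log (S.g' k x)) (f' := fun x => S.g'' k x / S.g' k x) (C := c)
    (fun z hz => ((S.deriv2 k hk z hz).log (S.deriv_ne k hk z hz)).hasDerivWithinAt)
    (fun z hz => (hc k hk z hz).le) hy hx
  have h' := (le_abs_self _).trans h
  simp only [Real.norm_eq_abs] at h'
  rw [← Real.exp_log_eq_abs (S.deriv_ne k hk x hx), ← Real.exp_log_eq_abs (S.deriv_ne k hk y hy),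
    ← Real.exp_add, Real.exp_le_exp]
  linarith

lemma GG_rpow_cone {c : ℝ} {k : ℕ} (hk : 1 ≤ k) (hG : Cone c (GG S k)) {h : ℝ} (h0 : 0 ≤ h) :
    Cone (h * c) (fun x => GG S k x ^ h) := by
  refine ⟨(GG_cont S hk).rpow_const fun x => Or.inr h0,
    fun x hx => Real.rpow_nonneg (GG_pos S hk x).le _, fun x hx y hy => ?_⟩
  have := Real.rpow_le_rpow (GG_pos S hk x).le (hG.2.2 x hx y hy) h0
  rw [Real.mul_rpow (GG_pos S hk y).le (Real.exp_pos _).le, ← Real.exp_mul] at this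
  convert this using 3; ring

/-- change of variables -/
lemma II_comp {k : ℕ} (hk : 1 ≤ k) (f : ℝ → ℝ) :
    II (fun x => GG S k x * f (S.g k (clmp x))) = ∫ x in Icc (S.b k) (S.b (k-1)), f x := by
  rw [← S.g_image k hk, integral_image_eq_integral_abs_deriv_smul measurableSet_Icc
    (fun x hx => (S.deriv1 k hk x hx).hasDerivWithinAt) (S.g_anti k hk).injOn]
  refine setIntegral_congr_fun measurableSet_Icc fun x hx => ?_
  simp [GG_of_mem S hx, clmp_of_mem hx]

lemma II_GG {k : ℕ} (hk : 1 ≤ k) : II (GG S k) = S.b (k-1) - S.b k := by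
  have := II_comp S hk (fun _ => 1)
  simp only [mul_one] at this
  have hb : S.b k ≤ S.b (k-1) := S.b_anti.antitone (Nat.sub_le k 1)
  simpa [hb] using this

lemma II_GG_rpow {k : ℕ} (hk : 1 ≤ k) {h : ℝ} (h0 : 0 ≤ h) (h1 : h ≤ 1) :
    II (fun x => GG S k x ^ h) ≤ (S.b (k-1) - S.b k) ^ h := by
  have ha : 0 < S.b (k-1) - S.b k := sub_pos.2 (S.b_anti (by omega))
  set a := S.b (k-1) - S.b k with hadef
  have h2 := II_mono (f := fun x => GG S k x ^ h) (g := fun x => a ^ h * (h * (GG S k x / a) + (1 - h)))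
    ((GG_cont S hk).rpow_const fun x => Or.inr h0)
    (by have := GG_cont S hk; fun_prop)
    (fun x _ => tangent (GG_pos S hk x).le ha h0 h1)
  refine h2.trans (le_of_eq ?_)
  have e : II (fun x => a ^ h * (h * (GG S k x / a) + (1 - h))) =
      a ^ h * (h * (II (GG S k) / a) + (1 - h)) := by
    unfold II
    rw [integral_const_mul, integral_add, integral_const_mul, integral_div]
    · simp
    · exact cont_int (by have := GG_cont S hk; fun_prop)
    · exact cont_int continuous_const
  rw [e, II_GG S hk, ← hadef, div_self ha.ne']; ring

lemma sum_II {f : ℝ → ℝ} (hf : Continuous f) (h0 : ∀ x ∈ Icc (0:ℝ) 1, 0 ≤ f x) (n : ℕ) :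
    ∑ k ∈ Finset.Icc 1 n, II (fun x => GG S k x * f (S.g k (clmp x))) ≤ II f := by
  have key : ∑ k ∈ Finset.Icc 1 n, II (fun x => GG S k x * f (S.g k (clmp x))) =
      ∫ x in (S.b n)..1, f x := by
    induction n with
    | zero => simp [S.b_zero]
    | succ n ih =>
      rw [Finset.sum_Icc_succ_top (by omega), ih, II_comp S (by omega), integral_Icc_eq_integral_Ioc,
        ← intervalIntegral.integral_of_le (S.b_anti.antitone (Nat.sub_le _ 1)), add_comm]
      exact intervalIntegral.integral_add_adjacent_intervals (hf.intervalIntegrable _ _)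
        (hf.intervalIntegrable _ _)
  rw [key, intervalIntegral.integral_of_le (b_le S n), ← integral_Icc_eq_integral_Ioc]
  exact setIntegral_mono_set (cont_int hf)
    ((ae_restrict_iff' measurableSet_Icc).2 (Eventually.of_forall h0))
    (Icc_subset_Icc_left (b_pos S n).le).eventuallyLE

end

section
variable (S : NonlinearIFS)

lemma word_maps {n : ℕ} (w : List ℕ) (hw : ∀ i ∈ w, 1 ≤ i ∧ i ≤ n) {x : ℝ} (hx : x ∈ Icc (0:ℝ) 1) :
    wordComp S.g w x ∈ Icc (0:ℝ) 1 := by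
  induction w with
  | nil => exact hx
  | cons k w ih =>
    exact g_maps' S (hw k (by simp)).1 (ih fun i hi => hw i (by simp [hi]))

lemma word_append (w v : List ℕ) (x : ℝ) :
    wordComp S.g (w ++ v) x = wordComp S.g w (wordComp S.g v x) := by
  induction w with
  | nil => rfl
  | cons k w ih => simp only [List.cons_append, wordComp, Function.comp, ih]

def Lev (n l : ℕ) : Set ℝ :=
  ⋃ w ∈ {w : List ℕ | w.length = l ∧ ∀ i ∈ w, 1 ≤ i ∧ i ≤ n}, wordComp S.g w '' Set.Icc (0 : ℝ) 1

lemma mem_Lev {n l : ℕ} {x : ℝ} : x ∈ Lev S n l ↔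
    ∃ w : List ℕ, (w.length = l ∧ ∀ i ∈ w, 1 ≤ i ∧ i ≤ n) ∧ ∃ y ∈ Icc (0:ℝ) 1, wordComp S.g w y = x := by
  simp only [Lev, mem_iUnion, mem_ofPred_eq, mem_image, exists_prop]

lemma Lev_anti (n : ℕ) {l l' : ℕ} (h : l ≤ l') : Lev S n l' ⊆ Lev S n l := by
  intro x hx
  rw [mem_Lev] at hx ⊢
  obtain ⟨w, ⟨hl, hw⟩, y, hy, rfl⟩ := hx
  refine ⟨w.take l, ⟨by simp [hl, h], fun i hi => hw i (List.mem_of_mem_take hi)⟩,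
    wordComp S.g (w.drop l) y,
    word_maps S _ (fun i hi => hw i (List.mem_of_mem_drop hi)) hy, ?_⟩
  rw [← word_append, List.take_append_drop]

lemma limitSet_eq (n : ℕ) : limitSet S.g n = ⋂ l, Lev S n (l+1) := rfl

lemma limitSet_sub (n : ℕ) : limitSet S.g n ⊆ Icc (0:ℝ) 1 := by
  intro x hx
  rw [limitSet_eq, mem_iInter] at hx
  obtain ⟨w, ⟨hl, hw⟩, y, hy, rfl⟩ := (mem_Lev S).1 (hx 0)
  exact word_maps S w hw hy

lemma limitSet_cover (n : ℕ) : limitSet S.g n ⊆ ⋃ k ∈ Finset.Icc 1 n, S.g k '' limitSet S.g n := by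
  intro x hx
  rw [limitSet_eq, mem_iInter] at hx
  have hP : ∃ k ∈ Finset.Icc 1 n, ∀ l, x ∈ S.g k '' Lev S n l := by
    by_contra! hcon
    choose! L hL using hcon
    obtain ⟨w, ⟨hl, hw⟩, y, hy, he⟩ := (mem_Lev S).1 (hx ((Finset.Icc 1 n).sup L))
    cases w with
    | nil => simp at hl
    | cons k w =>
      have hk : k ∈ Finset.Icc 1 n := Finset.mem_Icc.2 (hw k (by simp))
      apply hL k hk
      refine ⟨wordComp S.g w y, ?_, he⟩
      refine Lev_anti S n (Finset.le_sup (f := L) hk) ?_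
      rw [mem_Lev]
      exact ⟨w, ⟨by simpa using hl, fun i hi => hw i (by simp [hi])⟩, y, hy, rfl⟩
  obtain ⟨k, hk, hkl⟩ := hP
  simp only [mem_iUnion]
  refine ⟨k, hk, ?_⟩
  have hk1 : 1 ≤ k := (Finset.mem_Icc.1 hk).1
  have hsub : ∀ l, Lev S n l ⊆ Icc 0 1 := by
    intro l x hx
    obtain ⟨w, ⟨hl, hw⟩, y, hy, rfl⟩ := (mem_Lev S).1 hx
    exact word_maps S w hw hy
  obtain ⟨y, hy, rfl⟩ := hkl 0
  refine ⟨y, ?_, rfl⟩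
  rw [limitSet_eq, mem_iInter]
  intro l
  obtain ⟨z, hz, he⟩ := hkl (l+1)
  have : z = y := (S.g_anti k hk1).injOn (hsub _ hz) (hsub _ hy) he
  exact this ▸ hz

lemma g_lip {α : ℝ}
    (h5 : ∀ n, 1 ≤ n → ∀ x ∈ Set.Icc (0 : ℝ) 1, |S.g' n x| < α) {k : ℕ} (hk : 1 ≤ k)
    {x y : ℝ} (hx : x ∈ Icc (0:ℝ) 1) (hy : y ∈ Icc (0:ℝ) 1) :
    |S.g k x - S.g k y| ≤ α * |x - y| :=
  (convex_Icc (0:ℝ) 1).norm_image_sub_le_of_norm_hasDerivWithin_le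
    (f := S.g k) (f' := S.g' k) (C := α)
    (fun z hz => (S.deriv1 k hk z hz).hasDerivWithinAt)
    (fun z hz => (h5 k hk z hz).le) hy hx

/-- estimate on one small piece -/
lemma piece {c α : ℝ} (hc0 : 0 < c) (hα : α < 1)
    (h5 : ∀ n, 1 ≤ n → ∀ x ∈ Set.Icc (0 : ℝ) 1, |S.g' n x| < α)
    {k : ℕ} (hk : 1 ≤ k) (hG : Cone c (GG S k)) {h : ℝ} (h0 : 0 ≤ h)
    {C : ℝ} (hC : 0 ≤ C) {f : ℝ → ℝ} (hf : Cone C f) {P B : Set ℝ} (hP : Convex ℝ P) {δ : ℝ} (hδ : 0 ≤ δ)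
    (hPd : ∀ x ∈ P, ∀ y ∈ P, |x - y| ≤ δ) (hB : B ⊆ P ∩ Icc (0:ℝ) 1) :
    ∫⁻ x in S.g k '' B, ENNReal.ofReal (f x) ∂μH[h] ≤
      ENNReal.ofReal (Real.exp (2 * (h * c + C) * δ)) *
        ∫⁻ x in B, ENNReal.ofReal (GG S k x ^ h * f (S.g k (clmp x))) ∂μH[h] := by
  rcases B.eq_empty_or_nonempty with rfl | ⟨x0, hx0⟩
  · simp
  have hx0I := (hB hx0).2
  have hG0 := GG_pos S hk x0
  set K : ℝ := GG S k x0 * Real.exp (c * δ) with hK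
  have hKpos : 0 < K := by positivity
  have hlip : LipschitzOnWith K.toNNReal (S.g k) B := by
    refine LipschitzOnWith.mono ?_ hB
    apply (hP.inter (convex_Icc (0:ℝ) 1)).lipschitzOnWith_of_nnnorm_hasDerivWithin_le (f' := S.g' k)
    · exact fun z hz => (S.deriv1 k hk z hz.2).hasDerivWithinAt
    · intro z hz
      rw [← NNReal.coe_le_coe, coe_nnnorm, Real.coe_toNNReal _ hKpos.le, Real.norm_eq_abs,
        ← GG_of_mem S hz.2]
      refine (hG.2.2 z hz.2 x0 hx0I).trans ?_
      have := hPd z hz.1 x0 (hB hx0).1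
      rw [hK]
      gcongr
  have hm := hlip.hausdorffMeasure_image_le h0
  have hf0 := hf.2.1 _ (g_maps' S hk hx0I)
  set v := f (S.g k x0) with hv
  have hgd : ∀ x ∈ B, |S.g k x - S.g k x0| ≤ δ := by
    intro x hx
    have h1 := hPd x (hB hx).1 x0 (hB hx0).1
    have h2 := g_lip S h5 hk (hB hx).2 hx0I
    have := abs_nonneg (x - x0)
    nlinarith
  have s1 : ∫⁻ x in S.g k '' B, ENNReal.ofReal (f x) ∂μH[h] ≤
      ENNReal.ofReal (v * Real.exp (C * δ)) * (ENNReal.ofReal (K ^ h) * μH[h] B) := by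
    calc _ ≤ ∫⁻ x in S.g k '' B, ENNReal.ofReal (v * Real.exp (C * δ)) ∂μH[h] := by
          refine setLIntegral_mono measurable_const ?_
          rintro _ ⟨x, hx, rfl⟩
          apply ENNReal.ofReal_le_ofReal
          refine (hf.2.2 _ (g_maps' S hk (hB hx).2) _ (g_maps' S hk hx0I)).trans ?_
          have := hgd x hx
          gcongr
      _ = ENNReal.ofReal (v * Real.exp (C * δ)) * μH[h] (S.g k '' B) := setLIntegral_const _ _
      _ ≤ _ := by
          gcongr
          refine hm.trans (le_of_eq ?_)
          rw [← ENNReal.ofReal_rpow_of_nonneg hKpos.le h0]; rfl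
  have hcont : Continuous fun x => GG S k x ^ h * f (S.g k (clmp x)) :=
    ((GG_cont S hk).rpow_const fun x => Or.inr h0).mul (hf.1.comp (gc_cont S hk))
  have s2 : ENNReal.ofReal (GG S k x0 ^ h * v * Real.exp (-(h * c + C) * δ)) * μH[h] B ≤
      ∫⁻ x in B, ENNReal.ofReal (GG S k x ^ h * f (S.g k (clmp x))) ∂μH[h] := by
    rw [← setLIntegral_const]
    refine setLIntegral_mono hcont.measurable.ennreal_ofReal fun x hx => ENNReal.ofReal_le_ofReal ?_
    rw [clmp_of_mem (hB hx).2]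
    have r1 := (GG_rpow_cone S hk hG h0).2.2 x0 hx0I x (hB hx).2
    have r2 := hf.2.2 _ (g_maps' S hk hx0I) _ (g_maps' S hk (hB hx).2)
    have hGx : 0 < GG S k x ^ h := Real.rpow_pos_of_pos (GG_pos S hk x) _
    have hfx := hf.2.1 _ (g_maps' S hk (hB hx).2)
    have r1' : GG S k x0 ^ h ≤ GG S k x ^ h * Real.exp (h * c * δ) := by
      refine r1.trans ?_
      have := hPd x0 (hB hx0).1 x (hB hx).1
      gcongr
    have r2' : v ≤ f (S.g k x) * Real.exp (C * δ) := by
      refine r2.trans ?_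
      have := hgd x hx
      rw [abs_sub_comm] at this
      gcongr
    calc GG S k x0 ^ h * v * Real.exp (-(h * c + C) * δ)
        ≤ (GG S k x ^ h * Real.exp (h * c * δ)) * (f (S.g k x) * Real.exp (C * δ)) *
          Real.exp (-(h * c + C) * δ) := by gcongr
      _ = GG S k x ^ h * f (S.g k x) * (Real.exp (h * c * δ) * Real.exp (C * δ) *
          Real.exp (-(h * c + C) * δ)) := by ring
      _ = _ := by
          rw [← Real.exp_add, ← Real.exp_add]
          ring_nf
          simp
  refine s1.trans ?_
  refine le_trans (le_of_eq ?_) (mul_le_mul_right s2 _)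
  rw [← mul_assoc, ← mul_assoc, ← ENNReal.ofReal_mul (by positivity), ← ENNReal.ofReal_mul (by positivity)]
  congr 2
  rw [hK, Real.mul_rpow hG0.le (Real.exp_pos _).le, ← Real.exp_mul]
  have : Real.exp (C * δ) * Real.exp (c * δ * h) =
    Real.exp (2 * (h * c + C) * δ) * Real.exp (-(h * c + C) * δ) := by
    rw [← Real.exp_add, ← Real.exp_add]; ring_nf
  linear_combination (GG S k x0 ^ h * v) * this

lemma transfer {c α : ℝ} (hc0 : 0 < c) (hα : α < 1)
    (h5 : ∀ n, 1 ≤ n → ∀ x ∈ Set.Icc (0 : ℝ) 1, |S.g' n x| < α)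
    {k : ℕ} (hk : 1 ≤ k) (hG : Cone c (GG S k)) {h : ℝ} (h0 : 0 ≤ h)
    {C : ℝ} (hC : 0 ≤ C) {f : ℝ → ℝ} (hf : Cone C f) {J : Set ℝ} (hJ : J ⊆ Icc (0:ℝ) 1) :
    ∫⁻ x in S.g k '' J, ENNReal.ofReal (f x) ∂μH[h] ≤
        ∫⁻ x in J, ENNReal.ofReal (GG S k x ^ h * f (S.g k (clmp x))) ∂μH[h] := by
  set F : ℝ → ENNReal := fun x => ENNReal.ofReal (GG S k x ^ h * f (S.g k (clmp x))) with hF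
  have main : ∀ δ : ℝ, 0 < δ → ∫⁻ x in S.g k '' J, ENNReal.ofReal (f x) ∂μH[h] ≤
      ENNReal.ofReal (Real.exp (2 * (h * c + C) * δ)) * ∫⁻ x in J, F x ∂μH[h] := by
    intro δ hδ
    let P : ℤ → Set ℝ := fun i => Ico (i • δ) ((i + 1) • δ)
    have hU : ⋃ i, P i = univ := iUnion_Ico_zsmul hδ
    have hD : Pairwise (Function.onFun Disjoint P) := pairwise_disjoint_Ico_zsmul δ
    have hPm : ∀ i, MeasurableSet (P i) := fun i => measurableSet_Ico
    have e1 : ∫⁻ x in J, F x ∂μH[h] = ∑' i, ∫⁻ x in P i ∩ J, F x ∂μH[h] := by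
      rw [← setLIntegral_univ (μ := (μH[h]).restrict J), ← hU, lintegral_iUnion hPm hD]
      congr 1; ext i; rw [Measure.restrict_restrict (hPm i)]
    have e2 : S.g k '' J = ⋃ i, S.g k '' (P i ∩ J) := by
      rw [← image_iUnion, ← iUnion_inter, hU, univ_inter]
    rw [e1, e2, ← ENNReal.tsum_mul_left]
    refine (lintegral_iUnion_le _ _).trans (ENNReal.tsum_le_tsum fun i => ?_)
    refine piece S hc0 hα h5 hk hG h0 hC hf (P := P i) (convex_Ico _ _) hδ.le ?_ ?_
    · intro x hx y hy
      have hx1 := hx.1; have hx2 := hx.2; have hy1 := hy.1; have hy2 := hy.2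
      simp only [add_smul, one_smul] at hx1 hx2 hy1 hy2
      rw [abs_le]; constructor <;> linarith
    · exact inter_subset_inter_right _ hJ
  have ht : Tendsto (fun δ : ℝ => ENNReal.ofReal (Real.exp (2 * (h * c + C) * δ)) * ∫⁻ x in J, F x ∂μH[h])
      (𝓝[>] 0) (𝓝 (ENNReal.ofReal 1 * ∫⁻ x in J, F x ∂μH[h])) := by
    refine ENNReal.Tendsto.mul_const (ENNReal.tendsto_ofReal ?_) (Or.inl (by simp))
    have : Continuous fun δ : ℝ => Real.exp (2 * (h * c + C) * δ) := by fun_prop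
    have := this.tendsto 0
    simp only [mul_zero, Real.exp_zero] at this
    exact this.mono_left nhdsWithin_le_nhds
  rw [ENNReal.ofReal_one, one_mul] at ht
  exact ge_of_tendsto ht (eventually_mem_nhdsWithin.mono fun δ hδ => main δ hδ)

end

section
variable (S : NonlinearIFS)

def LF (n : ℕ) (f : ℝ → ℝ) (x : ℝ) : ℝ := ∑ k ∈ Finset.Icc 1 n, GG S k x * f (S.g k (clmp x))

lemma LF_cone {c α : ℝ} (hc0 : 0 < c)
    (hG : ∀ k, 1 ≤ k → Cone c (GG S k))
    (h5 : ∀ n, 1 ≤ n → ∀ x ∈ Set.Icc (0 : ℝ) 1, |S.g' n x| < α)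
    {C : ℝ} (hC : 0 ≤ C) {f : ℝ → ℝ} (hf : Cone C f) (n : ℕ) : Cone (α * C + c) (LF S n f) := by
  refine ⟨?_, fun x hx => ?_, fun x hx y hy => ?_⟩
  · unfold LF
    refine continuous_finsetSum _ fun k hk => ?_
    have hk1 := (Finset.mem_Icc.1 hk).1
    exact (GG_cont S hk1).mul (hf.1.comp (gc_cont S hk1))
  · refine Finset.sum_nonneg fun k hk => ?_
    have hk1 := (Finset.mem_Icc.1 hk).1
    exact mul_nonneg (GG_pos S hk1 x).le (hf.2.1 _ (g_maps' S hk1 (clmp_mem x)))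
  · unfold LF
    rw [Finset.sum_mul]
    refine Finset.sum_le_sum fun k hk => ?_
    have hk1 := (Finset.mem_Icc.1 hk).1
    rw [clmp_of_mem hx, clmp_of_mem hy]
    have r1 := (hG k hk1).2.2 x hx y hy
    have r2 := hf.2.2 _ (g_maps' S hk1 hx) _ (g_maps' S hk1 hy)
    have r3 := g_lip S h5 hk1 hx hy
    have hfy := hf.2.1 _ (g_maps' S hk1 hy)
    have hfx := hf.2.1 _ (g_maps' S hk1 hx)
    have hGy := GG_pos S hk1 y
    have r2' : f (S.g k x) ≤ f (S.g k y) * Real.exp (C * (α * |x - y|)) := r2.trans (by gcongr)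
    calc _ ≤ (GG S k y * Real.exp (c * |x - y|)) * (f (S.g k y) * Real.exp (C * (α * |x - y|))) := by
          gcongr
      _ = GG S k y * f (S.g k y) * (Real.exp (c * |x - y|) * Real.exp (C * (α * |x - y|))) := by ring
      _ = _ := by rw [← Real.exp_add]; ring_nf

lemma II_LF {C : ℝ} {f : ℝ → ℝ} (hf : Cone C f) (n : ℕ) : II (LF S n f) ≤ II f := by
  refine le_trans (le_of_eq ?_) (sum_II S hf.1 hf.2.1 n)
  unfold II LF
  refine integral_finsetSum _ fun k hk => ?_
  have hk1 := (Finset.mem_Icc.1 hk).1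
  exact cont_int ((GG_cont S hk1).mul (hf.1.comp (gc_cont S hk1)))

def errr (c h : ℝ) (n : ℕ) : ℝ := ((n:ℝ) ^ (1 - h) - 1) * Real.exp c + (n:ℝ) ^ (1 - h) * (1 - h)

lemma one_le_npow {h : ℝ} (h1 : h ≤ 1) {n : ℕ} (hn : 1 ≤ n) : 1 ≤ (n:ℝ) ^ (1 - h) :=
  Real.one_le_rpow (by exact_mod_cast hn) (by linarith)

lemma errr_nonneg {c h : ℝ} (h1 : h ≤ 1) {n : ℕ} (hn : 1 ≤ n) : 0 ≤ errr c h n := by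
  have := one_le_npow h1 hn
  unfold errr
  have a := Real.exp_pos c
  have : 0 ≤ 1 - h := by linarith
  have : 0 ≤ (n:ℝ) ^ (1 - h) - 1 := by linarith
  positivity

lemma sum_a (l m : ℕ) (hlm : l ≤ m) : ∑ k ∈ Finset.Ioc l m, (S.b (k-1) - S.b k) = S.b l - S.b m := by
  induction m, hlm using Nat.le_induction with
  | base => simp
  | succ m hm ih =>
    rw [← Finset.insert_Ioc_right_eq_Ioc_add_one hm, Finset.sum_insert (by simp), ih]; simp

lemma pow_err {c α : ℝ} (hc0 : 0 < c) (hα : α < 1)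
    (hG : ∀ k, 1 ≤ k → Cone c (GG S k))
    (h5 : ∀ n, 1 ≤ n → ∀ x ∈ Set.Icc (0 : ℝ) 1, |S.g' n x| < α)
    {C : ℝ} (hC : 0 ≤ C) {f : ℝ → ℝ} (hf : Cone C f) {n : ℕ} (hn : 1 ≤ n) {h : ℝ} (h0 : 0 ≤ h)
    (h1 : h ≤ 1) {x : ℝ} (hx : x ∈ Icc (0:ℝ) 1) :
    ∑ k ∈ Finset.Icc 1 n, GG S k x ^ h * f (S.g k (clmp x)) ≤
      LF S n f x + errr c h n * (Real.exp C * II f) := by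
  have hmem : ∀ k ∈ Finset.Icc 1 n, 1 ≤ k := fun k hk => (Finset.mem_Icc.1 hk).1
  set M := Real.exp C * II f with hM
  have hM0 : 0 ≤ M := mul_nonneg (Real.exp_pos _).le hf.II_nonneg
  set s := ∑ k ∈ Finset.Icc 1 n, GG S k x with hs
  have hs0 : 0 < s := Finset.sum_pos (fun k hk => GG_pos S (hmem k hk) x) ⟨1, by simp [hn]⟩
  have hs1 : s ≤ Real.exp c := by
    calc s ≤ ∑ k ∈ Finset.Icc 1 n, Real.exp c * (S.b (k-1) - S.b k) := by
          refine Finset.sum_le_sum fun k hk => ?_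
          rw [← II_GG S (hmem k hk)]
          exact (hG k (hmem k hk)).le_II hc0.le hx
      _ = Real.exp c * (S.b 0 - S.b n) := by
          rw [← Finset.mul_sum, ← sum_a S 0 n (Nat.zero_le n)]; rfl
      _ ≤ Real.exp c * 1 := by
          gcongr; rw [S.b_zero]; linarith [b_pos S n]
      _ = _ := mul_one _
  have hp := one_le_npow h1 hn
  have hsum : ∑ k ∈ Finset.Icc 1 n, GG S k x ^ h - s ≤ errr c h n := by
    have r1 := sum_rpow_le' (Finset.Icc 1 n) (fun k => GG S k x) (fun k hk => (GG_pos S (hmem k hk) x).le)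
      hs0 le_rfl n hn (by simp) h0 h1
    have r2 := tangent hs0.le one_pos h0 h1
    simp only [Real.one_rpow, one_mul, div_one] at r2
    have r3 := mul_le_mul_of_nonneg_left r2 (by linarith : 0 ≤ (n:ℝ) ^ (1-h))
    unfold errr
    have r4 : ((n:ℝ) ^ (1 - h) - 1) * s ≤ ((n:ℝ) ^ (1 - h) - 1) * Real.exp c :=
      mul_le_mul_of_nonneg_left hs1 (by linarith)
    have r5 : (n:ℝ) ^ (1 - h) * (h * s) ≤ (n:ℝ) ^ (1 - h) * s := by
      gcongr; nlinarith
    nlinarith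
  have hterm : ∀ k ∈ Finset.Icc 1 n, GG S k x ^ h * f (S.g k (clmp x)) ≤
      GG S k x * f (S.g k (clmp x)) + (GG S k x ^ h - GG S k x) * M := by
    intro k hk
    have hGp := GG_pos S (hmem k hk) x
    have hG1 : GG S k x ≤ 1 := ((h5 k (hmem k hk) _ (clmp_mem x)).trans hα).le
    have hle : GG S k x ≤ GG S k x ^ h := by
      simpa using Real.rpow_le_rpow_of_exponent_ge hGp hG1 h1
    have hfM : f (S.g k (clmp x)) ≤ M := hf.le_II hC (g_maps' S (hmem k hk) (clmp_mem x))
    nlinarith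
  refine (Finset.sum_le_sum hterm).trans ?_
  rw [Finset.sum_add_distrib, ← Finset.sum_mul, Finset.sum_sub_distrib]
  have := mul_le_mul_of_nonneg_right hsum hM0
  unfold LF
  linarith

def PP (h : ℝ) (J : Set ℝ) (C K : ℝ) : Prop :=
  ∀ f, Cone C f → ∫⁻ x in J, ENNReal.ofReal (f x) ∂μH[h] ≤ ENNReal.ofReal (K * II f) * μH[h] J

lemma PP_step {c α : ℝ} (hc0 : 0 < c) (hα : α < 1) (hα0 : 0 < α)
    (hG : ∀ k, 1 ≤ k → Cone c (GG S k))
    (h5 : ∀ n, 1 ≤ n → ∀ x ∈ Set.Icc (0 : ℝ) 1, |S.g' n x| < α)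
    {n : ℕ} (hn : 1 ≤ n) {h : ℝ} (h0 : 0 ≤ h) (h1 : h ≤ 1) {C s θ : ℝ} (hC : C = 2 * c / (1 - α))
    (hs : s = (1 - α) / 2) (hθ : θ = s * Real.exp (-((1 - s) * C))) {K : ℝ} (hK : 0 ≤ K)
    (hP : PP h (limitSet S.g n) C K) :
    PP h (limitSet S.g n) C ((1 - θ) * K + θ + errr c h n * Real.exp C) := by
  intro f hf
  set J := limitSet S.g n with hJdef
  have hJ : J ⊆ Icc 0 1 := limitSet_sub S n
  have hmem : ∀ k ∈ Finset.Icc 1 n, 1 ≤ k := fun k hk => (Finset.mem_Icc.1 hk).1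
  have hα' : 0 < 1 - α := by linarith
  have hC0 : 0 ≤ C := by rw [hC]; positivity
  have hs0 : 0 ≤ s := by rw [hs]; positivity
  have hs1 : s ≤ 1 := by rw [hs]; linarith
  have hCC : α * C + c = (1 - s) * C := by rw [hC, hs]; field_simp; ring
  have hF : Cone ((1 - s) * C) (LF S n f) := hCC ▸ LF_cone S hc0 hG h5 hC0 hf n
  have hIF := II_LF S hf n
  have hIF0 := hF.II_nonneg
  have hI0 := hf.II_nonneg
  have hθ0 : 0 ≤ θ := by rw [hθ]; positivity
  have hC20 : 0 ≤ (1 - s) * C := mul_nonneg (by linarith) hC0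
  have hθ1 : θ ≤ 1 := by
    rw [hθ]
    have : Real.exp (-((1 - s) * C)) ≤ 1 := Real.exp_le_one_iff.2 (by linarith)
    nlinarith [Real.exp_pos (-((1 - s) * C))]
  set F := LF S n f with hFdef
  set t := θ * II F with ht
  have ht0 : 0 ≤ t := by positivity
  have hsub : Cone C (fun x => F x - t) := by
    refine Cone.sub hs0 hs1 hF hC0 fun x hx => ?_
    rw [ht, hθ, mul_assoc]
    exact mul_le_mul_of_nonneg_left (hF.II_le hC20 hx) hs0
  have hIsub : II (fun x => F x - t) = (1 - θ) * II F := by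
    have : II (fun x => F x - t) = II F - t := by
      unfold II
      rw [integral_sub (cont_int hF.1) (cont_int continuous_const)]
      simp
    rw [this, ht]; ring
  set e := errr c h n * (Real.exp C * II f) with he
  have he0 : 0 ≤ e := mul_nonneg (errr_nonneg h1 hn) (by positivity)
  have hcontk : ∀ k ∈ Finset.Icc 1 n, Continuous fun x => GG S k x ^ h * f (S.g k (clmp x)) :=
    fun k hk => ((GG_cont S (hmem k hk)).rpow_const fun x => Or.inr h0).mul
      (hf.1.comp (gc_cont S (hmem k hk)))
  calc ∫⁻ x in J, ENNReal.ofReal (f x) ∂μH[h]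
      ≤ ∫⁻ x in ⋃ k ∈ Finset.Icc 1 n, S.g k '' J, ENNReal.ofReal (f x) ∂μH[h] :=
        lintegral_mono_set (limitSet_cover S n)
    _ ≤ ∑ k ∈ Finset.Icc 1 n, ∫⁻ x in S.g k '' J, ENNReal.ofReal (f x) ∂μH[h] := by
        have hle : (μH[h]).restrict (⋃ k ∈ Finset.Icc 1 n, S.g k '' J) ≤
            ∑ k ∈ Finset.Icc 1 n, (μH[h]).restrict (S.g k '' J) := by
          refine Measure.le_iff.2 fun A hA => ?_
          rw [Measure.restrict_apply hA, Measure.finsetSum_apply, inter_iUnion₂]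
          refine (measure_biUnion_finset_le _ _).trans (Finset.sum_le_sum fun k _ => ?_)
          rw [Measure.restrict_apply hA]
        refine (lintegral_mono' hle le_rfl).trans (le_of_eq ?_)
        rw [lintegral_finsetSum_measure]
    _ ≤ ∑ k ∈ Finset.Icc 1 n, ∫⁻ x in J, ENNReal.ofReal (GG S k x ^ h * f (S.g k (clmp x))) ∂μH[h] :=
        Finset.sum_le_sum fun k hk =>
          transfer S hc0 hα h5 (hmem k hk) (hG k (hmem k hk)) h0 hC0 hf hJ
    _ = ∫⁻ x in J, ∑ k ∈ Finset.Icc 1 n, ENNReal.ofReal (GG S k x ^ h * f (S.g k (clmp x))) ∂μH[h] := by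
        rw [lintegral_finsetSum' _ fun k hk => (hcontk k hk).measurable.ennreal_ofReal.aemeasurable]
    _ ≤ ∫⁻ x in J, (ENNReal.ofReal (F x - t) + ENNReal.ofReal (t + e)) ∂μH[h] := by
        refine setLIntegral_mono ?_ fun x hx => ?_
        · exact ((hF.1.sub continuous_const).measurable.ennreal_ofReal).add measurable_const
        · rw [← ENNReal.ofReal_sum_of_nonneg, ← ENNReal.ofReal_add (hsub.2.1 x (hJ hx)) (by positivity)]
          · apply ENNReal.ofReal_le_ofReal
            have := pow_err S hc0 hα hG h5 hC0 hf hn h0 h1 (hJ hx)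
            linarith
          · intro k hk
            exact mul_nonneg (Real.rpow_nonneg (GG_pos S (hmem k hk) x).le _)
              (hf.2.1 _ (g_maps' S (hmem k hk) (clmp_mem x)))
    _ = ∫⁻ x in J, ENNReal.ofReal (F x - t) ∂μH[h] + ENNReal.ofReal (t + e) * μH[h] J := by
        rw [lintegral_add_right _ measurable_const, setLIntegral_const]
    _ ≤ ENNReal.ofReal (K * ((1 - θ) * II F)) * μH[h] J + ENNReal.ofReal (t + e) * μH[h] J := by
        gcongr
        rw [← hIsub]; exact hP _ hsub
    _ = ENNReal.ofReal (K * ((1 - θ) * II F) + (t + e)) * μH[h] J := by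
        have : 0 ≤ 1 - θ := by linarith
        rw [← add_mul, ← ENNReal.ofReal_add (by positivity) (by positivity)]
    _ ≤ _ := by
        gcongr
        have : 0 ≤ 1 - θ := by linarith
        have q : (K * (1 - θ) + θ) * II F ≤ (K * (1 - θ) + θ) * II f :=
          mul_le_mul_of_nonneg_left hIF (by positivity)
        rw [he, ht]; linarith

lemma PP_final {c α : ℝ} (hc0 : 0 < c) (hα : α < 1) (hα0 : 0 < α)
    (hG : ∀ k, 1 ≤ k → Cone c (GG S k))
    (h5 : ∀ n, 1 ≤ n → ∀ x ∈ Set.Icc (0 : ℝ) 1, |S.g' n x| < α)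
    {n : ℕ} (hn : 1 ≤ n) {h : ℝ} (h0 : 0 ≤ h) (h1 : h ≤ 1) {C s θ : ℝ} (hC : C = 2 * c / (1 - α))
    (hs : s = (1 - α) / 2) (hθ : θ = s * Real.exp (-((1 - s) * C)))
    (hfin : μH[h] (limitSet S.g n) ≠ ⊤) :
    PP h (limitSet S.g n) C (1 + errr c h n * Real.exp C / θ) := by
  have hα' : 0 < 1 - α := by linarith
  have hC0 : 0 ≤ C := by rw [hC]; positivity
  have hs0 : 0 < s := by rw [hs]; positivity
  have hs1 : s < 1 := by rw [hs]; linarith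
  have hθ0 : 0 < θ := by rw [hθ]; positivity
  have hC20 : 0 ≤ (1 - s) * C := mul_nonneg (by linarith) hC0
  have hθ1 : θ < 1 := by
    rw [hθ]
    have : Real.exp (-((1 - s) * C)) ≤ 1 := Real.exp_le_one_iff.2 (by linarith)
    nlinarith [Real.exp_pos (-((1 - s) * C))]
  have her := errr_nonneg (c := c) h1 hn
  set K := 1 + errr c h n * Real.exp C / θ with hKdef
  have hK0 : 0 ≤ K := by positivity
  have h1θ : 0 ≤ 1 - θ := by linarith
  have it : ∀ j : ℕ, PP h (limitSet S.g n) C (K + (1 - θ) ^ j * Real.exp C) := by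
    intro j
    induction j with
    | zero =>
      intro f hf
      rw [← setLIntegral_const]
      refine setLIntegral_mono measurable_const fun x hx => ENNReal.ofReal_le_ofReal ?_
      have := hf.le_II hC0 (limitSet_sub S n hx)
      have := mul_nonneg hK0 hf.II_nonneg
      simp only [pow_zero, one_mul]; linarith
    | succ j ih =>
      have := PP_step S hc0 hα hα0 hG h5 hn h0 h1 hC hs hθ (by positivity) ih
      convert this using 1
      rw [hKdef]; field_simp; ring
  intro f hf
  have ht : Tendsto (fun j : ℕ => ENNReal.ofReal ((K + (1 - θ) ^ j * Real.exp C) * II f) *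
      μH[h] (limitSet S.g n)) atTop
      (𝓝 (ENNReal.ofReal ((K + 0 * Real.exp C) * II f) * μH[h] (limitSet S.g n))) := by
    refine ENNReal.Tendsto.mul_const (ENNReal.tendsto_ofReal ?_) (Or.inr hfin)
    exact (((tendsto_pow_atTop_nhds_zero_of_lt_one h1θ (by linarith)).mul_const _).const_add K).mul_const _
  rw [zero_mul, add_zero] at ht
  exact ge_of_tendsto' ht fun j => it j f hf

lemma interval_bound {c α : ℝ} (hc0 : 0 < c) (hα : α < 1) (hα0 : 0 < α)
    (hG : ∀ k, 1 ≤ k → Cone c (GG S k))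
    (h5 : ∀ n, 1 ≤ n → ∀ x ∈ Set.Icc (0 : ℝ) 1, |S.g' n x| < α)
    {n : ℕ} (hn : 1 ≤ n) {h : ℝ} (h0 : 0 < h) (h1 : h ≤ 1) {C K : ℝ} (hC : c ≤ C) (hK : 0 ≤ K)
    (hP : PP h (limitSet S.g n) C K) (l q : ℕ) (hq : 1 ≤ q) :
    μH[h] (Icc (S.b (l+q)) (S.b l) ∩ limitSet S.g n) ≤
      ENNReal.ofReal (K * (n:ℝ) ^ (1 - h) * (S.b l - S.b (l+q)) ^ h) * μH[h] (limitSet S.g n) := by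
  set J := limitSet S.g n with hJdef
  have hJ : J ⊆ Icc 0 1 := limitSet_sub S n
  have : NullSingletonClass (μH[h] : Measure ℝ) := Measure.nullSingletonClass_hausdorff ℝ h0
  set T := Finset.Ioc l (l+q) ∩ Finset.Icc 1 n with hT
  have hTm : ∀ k ∈ T, 1 ≤ k := fun k hk => by simp [hT] at hk; omega
  have hcov : Icc (S.b (l+q)) (S.b l) ∩ J ⊆ (⋃ k ∈ T, S.g k '' J) ∪ {S.b l, S.b (l+q)} := by
    rintro x ⟨hx, hxJ⟩
    have := limitSet_cover S n hxJ
    simp only [mem_iUnion] at this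
    obtain ⟨k, hk, y, hy, rfl⟩ := this
    have hk1 := (Finset.mem_Icc.1 hk).1
    have hg := g_maps S hk1 (hJ hy)
    by_cases hkl : k ≤ l
    · right; left
      exact le_antisymm hx.2 ((S.b_anti.antitone hkl).trans hg.1)
    by_cases hkq : k ≤ l + q
    · left
      simp only [mem_iUnion]
      exact ⟨k, Finset.mem_inter.2 ⟨Finset.mem_Ioc.2 ⟨by omega, hkq⟩, hk⟩, y, hy, rfl⟩
    · right; right
      exact le_antisymm (hg.2.trans (S.b_anti.antitone (by omega))) hx.1
  have hone : Cone 0 (fun _ => (1:ℝ)) := ⟨continuous_const, fun _ _ => zero_le_one, fun _ _ _ _ => by simp⟩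
  have ha : ∀ k ∈ T, 0 ≤ S.b (k-1) - S.b k := fun k _ => sub_nonneg.2 (S.b_anti.antitone (Nat.sub_le k 1))
  have hk : ∀ k ∈ T, μH[h] (S.g k '' J) ≤ ENNReal.ofReal (K * (S.b (k-1) - S.b k) ^ h) * μH[h] J := by
    intro k hkT
    have hk1 := hTm k hkT
    have t := transfer S hc0 hα h5 hk1 (hG k hk1) h0.le le_rfl hone hJ
    simp only [ENNReal.ofReal_one, mul_one, setLIntegral_const, one_mul] at t
    refine t.trans ((hP _ ((GG_rpow_cone S hk1 (hG k hk1) h0.le).mono ?_)).trans ?_)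
    · nlinarith
    · have := II_GG_rpow S hk1 h0.le h1
      gcongr
  have hsum : ∑ k ∈ T, (S.b (k-1) - S.b k) ≤ S.b l - S.b (l+q) := by
    rw [← sum_a S l (l+q) (by omega)]
    exact Finset.sum_le_sum_of_subset_of_nonneg Finset.inter_subset_left
      fun k _ _ => sub_nonneg.2 (S.b_anti.antitone (Nat.sub_le k 1))
  have hA : 0 < S.b l - S.b (l+q) := sub_pos.2 (S.b_anti (by omega))
  have hcard : T.card ≤ n := (Finset.card_le_card Finset.inter_subset_right).trans (by simp)
  have hfinal := sum_rpow_le' T _ ha hA hsum n hn hcard h0.le h1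
  calc μH[h] (Icc (S.b (l+q)) (S.b l) ∩ J)
      ≤ μH[h] (⋃ k ∈ T, S.g k '' J) + μH[h] {S.b l, S.b (l+q)} :=
        (measure_mono hcov).trans (measure_union_le _ _)
    _ = μH[h] (⋃ k ∈ T, S.g k '' J) := by
        rw [(Set.toFinite {S.b l, S.b (l+q)}).measure_zero, add_zero]
    _ ≤ ∑ k ∈ T, μH[h] (S.g k '' J) := measure_biUnion_finset_le _ _
    _ ≤ ∑ k ∈ T, ENNReal.ofReal (K * (S.b (k-1) - S.b k) ^ h) * μH[h] J := Finset.sum_le_sum hk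
    _ = ENNReal.ofReal (K * ∑ k ∈ T, (S.b (k-1) - S.b k) ^ h) * μH[h] J := by
        rw [← Finset.sum_mul, Finset.mul_sum, ENNReal.ofReal_sum_of_nonneg]
        exact fun k hk => mul_nonneg hK (Real.rpow_nonneg (ha k hk) _)
    _ ≤ _ := by
        rw [mul_assoc K]
        gcongr

end

/-- In the nonlinear setting,
    `limsup_{n→∞} sup{ m_n([b_{l+q}, b_l])/(b_l - b_{l+q})^{h_n} : l ≥ 0, q ≥ 1 } ≤ 1`. -/
theorem nonlinear_density_on_b_intervals (S : NonlinearIFS) :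
    Filter.limsup
      (fun n : ℕ => ⨆ (l : ℕ) (q : ℕ) (_ : 1 ≤ q),
        normMeas S n (Set.Icc (S.b (l + q)) (S.b l)) /
          ENNReal.ofReal ((S.b l - S.b (l + q)) ^ S.h n))
      Filter.atTop ≤ 1 := by
  obtain ⟨c, hc0, h3⟩ := S.N3
  obtain ⟨α, hα, h5⟩ := S.N5
  have hα0 : 0 < α := (abs_nonneg _).trans_lt (h5 1 le_rfl 0 (by simp))
  have hG : ∀ k, 1 ≤ k → Cone c (GG S k) := fun k hk => GG_cone S h3 hk
  have hα' : 0 < 1 - α := by linarith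
  obtain ⟨C, hC⟩ : ∃ C, C = 2 * c / (1 - α) := ⟨_, rfl⟩
  obtain ⟨s, hs⟩ : ∃ s, s = (1 - α) / 2 := ⟨_, rfl⟩
  obtain ⟨θ, hθ⟩ : ∃ θ, θ = s * Real.exp (-((1 - s) * C)) := ⟨_, rfl⟩
  have hs0 : 0 < s := by rw [hs]; positivity
  have hθ0 : 0 < θ := by rw [hθ]; positivity
  have hcC : c ≤ C := by rw [hC, le_div_iff₀ hα']; nlinarith
  -- h ≤ 1
  have h1 : ∀ n, 1 ≤ n → S.h n ≤ 1 := by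
    intro n hn
    have := (dimH_mono (subset_univ (limitSet S.g n))).trans_eq Real.dimH_univ
    rw [S.h_dim n hn, ENNReal.ofReal_le_one] at this
    exact this
  -- h → 1
  have hlim0 : Tendsto (fun n => 1 - S.h n) atTop (𝓝 0) := by
    refine squeeze_zero' ?_ ?_ S.N1
    · filter_upwards [eventually_ge_atTop 1] with n hn
      linarith [h1 n hn]
    · filter_upwards [eventually_ge_atTop 3] with n hn
      have h3n : (3:ℝ) ≤ n := by exact_mod_cast hn
      have : 1 ≤ Real.log n := by
        rw [Real.le_log_iff_exp_le (by linarith)]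
        linarith [Real.exp_one_lt_three]
      have := h1 n (by omega)
      nlinarith
  have hpow : Tendsto (fun n : ℕ => (n:ℝ) ^ (1 - S.h n)) atTop (𝓝 1) := by
    have h := (Real.continuous_exp.tendsto 0).comp S.N1
    rw [Real.exp_zero] at h
    refine h.congr' ?_
    filter_upwards [eventually_ge_atTop 1] with n hn
    have : (0:ℝ) < n := by exact_mod_cast hn
    rw [Real.rpow_def_of_pos this]
    simp only [Function.comp]
    ring_nf
  have herr : Tendsto (fun n => errr c (S.h n) n) atTop (𝓝 0) := by
    have := ((hpow.sub_const 1).mul_const (Real.exp c)).add (hpow.mul hlim0)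
    simpa [errr] using this
  have hKlim : Tendsto (fun n : ℕ => ENNReal.ofReal
      ((1 + errr c (S.h n) n * Real.exp C / θ) * (n:ℝ) ^ (1 - S.h n))) atTop (𝓝 1) := by
    have := ((((herr.mul_const (Real.exp C)).div_const θ).const_add 1).mul hpow)
    have := ENNReal.tendsto_ofReal this
    simpa using this
  refine le_trans (limsup_le_limsup (f := atTop) (v := fun n : ℕ => ENNReal.ofReal
      ((1 + errr c (S.h n) n * Real.exp C / θ) * (n:ℝ) ^ (1 - S.h n))) ?_) (le_of_eq hKlim.limsup_eq)
  have hpos : ∀ᶠ n in atTop, 0 < S.h n := by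
    filter_upwards [hlim0.eventually (gt_mem_nhds (one_pos : (0:ℝ) < 1))] with n hn
    linarith
  filter_upwards [hpos, eventually_ge_atTop 1] with n hn0 hn
  refine iSup_le fun l => iSup_le fun q => iSup_le fun hq => ?_
  by_cases hfin : μH[S.h n] (limitSet S.g n) = ⊤
  · simp [normMeas, hfin]
  have hPP := PP_final S hc0 hα hα0 hG h5 hn hn0.le (h1 n hn) hC hs hθ hfin
  have her := errr_nonneg (c := c) (h1 n hn) hn
  have hb := interval_bound S hc0 hα hα0 hG h5 hn hn0 (h1 n hn) hcC (by positivity) hPP l q hq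
  have hA : 0 < S.b l - S.b (l+q) := sub_pos.2 (S.b_anti (by omega))
  refine ENNReal.div_le_of_le_mul ?_
  rw [← ENNReal.ofReal_mul (by positivity)]
  exact ENNReal.div_le_of_le_mul hb
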